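/- In the n-rank Taft algebra, the comultiplication satisfies Δ(x^γ K(α)) = Σ_{ξ ≤ γ} (γ choose ξ)_q q^{-(γ-ξ)*ξ} x^{γ-ξ} K(ξ+α) ⊗ x^ξ K(α), where (γ choose ξ)_q = ∏_i (γ_i choose ξ_i)_q is the product of Gaussian binomial coefficients. -/

import Mathlib

open scoped TensorProduct

def starForm {n : ℕ} (α β : Fin n → ℤ) : ℤ :=
  ∑ j : Fin n, ∑ i : Fin n, if (j : ℕ) < (i : ℕ) then α i * β j else 0

noncomputable def theta {k : Type*} [Field k] (q : k) {n : ℕ} (α β : Fin n → ℤ) : k :=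
  q ^ (starForm α β - starForm β α)

def epsZ {n : ℕ} (i : Fin n) : Fin n → ℤ := fun j => if j = i then 1 else 0

/-- The ordered monomial `x^γ = x_1^{γ_1} ⋯ x_n^{γ_n}` built from a family `x`. -/
def xpow {A : Type*} [Ring A] {n : ℕ} (x : Fin n → A) (γ : Fin n → ℕ) : A :=
  ((List.finRange n).map (fun i => x i ^ γ i)).prod

/-- A presentation of the `n`-rank Taft algebra inside a Hopf algebra `A`
(generators `K(α)`, `x_i` and the defining relations, together with the values of
the comultiplication, counit and antipode on the generators).  The scalar `t`
is the parameter used in the skew bicharacter `θ`: for the `n`-rank Taft algebra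
`𝒜̄_q(n)` one takes `t = q`, while `t = 1` gives the presentation of the `n`-fold
tensor power of the Taft algebra (the rank-`n` Taft algebra `𝒜̄_q(1)^{⊗n}`). -/
structure TaftPresentation (k : Type*) [Field k] (A : Type*) [Ring A]
    [HopfAlgebra k A] (n ℓ : ℕ) (q t : k) where
  K : (Fin n → ℤ) → A
  x : Fin n → A
  K_zero : K 0 = 1
  K_add : ∀ α β, K α * K β = K (α + β)
  K_ell : ∀ i, K (epsZ i) ^ ℓ = 1
  K_x : ∀ i j, K (epsZ i) * x j
      = (theta t (epsZ i) (epsZ j) * if i = j then q else 1) • (x j * K (epsZ i))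
  x_x : ∀ i j, x i * x j = theta t (epsZ i) (epsZ j) • (x j * x i)
  x_ell : ∀ i, x i ^ ℓ = 0
  comul_K : ∀ α, Coalgebra.comul (R := k) (K α) = K α ⊗ₜ[k] K α
  comul_x : ∀ i, Coalgebra.comul (R := k) (x i) = x i ⊗ₜ[k] 1 + K (epsZ i) ⊗ₜ[k] x i
  counit_K : ∀ α, Coalgebra.counit (R := k) (K α) = 1
  counit_x : ∀ i, Coalgebra.counit (R := k) (x i) = 0
  antipode_K : ∀ α, HopfAlgebra.antipode (R := k) (K α) = K (-α)
  antipode_x : ∀ i, HopfAlgebra.antipode (R := k) (x i) = -(K (-epsZ i) * x i)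

namespace TaftPresentation

variable {k : Type*} [Field k] {A : Type*} [Ring A] [HopfAlgebra k A]
  {n ℓ : ℕ} {q t : k}

/-- The basis monomial `x^γ K(α)`. -/
def mono (T : TaftPresentation k A n ℓ q t) (γ α : Fin n → Fin ℓ) : A :=
  xpow T.x (fun i => (γ i : ℕ)) * T.K (fun i => (α i : ℤ))

end TaftPresentation

/-- The Gauss integer `(m)_q = 1 + q + ⋯ + q^{m-1}`. -/
def qInt {k : Type*} [Field k] (q : k) (m : ℕ) : k := ∑ i ∈ Finset.range m, q ^ i

/-- The Gauss factorial `(m)_q! = (1)_q (2)_q ⋯ (m)_q`. -/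
def qFac {k : Type*} [Field k] (q : k) (m : ℕ) : k := ∏ i ∈ Finset.range m, qInt q (i + 1)

/-- The Gaussian binomial coefficient `(m choose j)_q`. -/
noncomputable def qBinom {k : Type*} [Field k] (q : k) (m j : ℕ) : k :=
  qFac q m / (qFac q (m - j) * qFac q j)

/-!
The relation `K(ε_i) x_i = q x_i K(ε_i)` makes the two summands of `Δ(x_i) = x_i ⊗ 1 + K(ε_i) ⊗ x_i`
`q`-commute, so the noncommutative `q`-binomial theorem expands each power `Δ(x_i)^{γ_i}`.
Multiplying the expansions out leaves ordered products of the `x_i ^ a_i K(ε_i) ^ b_i`; moving every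
`K(ε_i)` to the right past the `x_j` with `i < j` costs `θ(ε_i, ε_j) = t⁻¹` (where `t = q` for the
Taft algebra) at each crossing, and these factors make up `t ^ (-starForm a b)`.
-/

section GaussianBinomial

/-- The Gaussian binomial coefficient as a polynomial expression in `q`, given by the `q`-Pascal
recursion. Unlike the quotient `qBinom`, it is meaningful when Gauss factorials vanish. -/
def gaussBinom {R : Type*} [CommSemiring R] (q : R) : ℕ → ℕ → R
  | _, 0 => 1
  | 0, _ + 1 => 0
  | m + 1, j + 1 => q ^ (j + 1) * gaussBinom q m (j + 1) + gaussBinom q m j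

section CommSemiring

variable {R : Type*} [CommSemiring R] (q : R)

@[simp]
theorem gaussBinom_zero_right (m : ℕ) : gaussBinom q m 0 = 1 := by
  cases m <;> rfl

theorem gaussBinom_succ_succ (m j : ℕ) :
    gaussBinom q (m + 1) (j + 1) = q ^ (j + 1) * gaussBinom q m (j + 1) + gaussBinom q m j :=
  rfl

theorem gaussBinom_eq_zero_of_lt {m j : ℕ} (h : m < j) : gaussBinom q m j = 0 := by
  induction m generalizing j with
  | zero =>
    cases j with
    | zero => exact absurd h (lt_irrefl 0)
    | succ j => rfl
  | succ m ih =>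
    cases j with
    | zero => exact absurd h (Nat.not_lt_zero _)
    | succ j =>
      rw [gaussBinom_succ_succ, ih (by omega), ih (by omega), mul_zero, add_zero]

end CommSemiring

variable {k : Type*} [Field k] {q : k}

theorem qInt_add (q : k) (a b : ℕ) : qInt q (a + b) = qInt q a + q ^ a * qInt q b := by
  simp only [qInt, Finset.sum_range_add, Finset.mul_sum, pow_add]

theorem qFac_zero (q : k) : qFac q 0 = 1 :=
  Finset.prod_range_zero _

theorem qFac_succ (q : k) (m : ℕ) : qFac q (m + 1) = qFac q m * qInt q (m + 1) :=
  Finset.prod_range_succ _ _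

theorem gaussBinom_mul_qFac_mul_qFac (q : k) (i j : ℕ) :
    gaussBinom q (i + j) j * (qFac q i * qFac q j) = qFac q (i + j) := by
  induction j generalizing i with
  | zero => rw [gaussBinom_zero_right, qFac_zero, one_mul, mul_one, add_zero]
  | succ j ihj =>
    induction i with
    | zero =>
      have diagonal := ihj 0
      rw [zero_add] at diagonal ⊢
      rw [gaussBinom_succ_succ, gaussBinom_eq_zero_of_lt q (Nat.lt_succ_self j), qFac_succ]
      linear_combination qInt q (j + 1) * diagonal
    | succ i ihi =>
      have left_parent := ihj (i + 1)
      have qInt_split : qInt q (i + 1 + j + 1) = qInt q (j + 1) + q ^ (j + 1) * qInt q (i + 1) := by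
        rw [← qInt_add]
        congr 1
        omega
      rw [show i + (j + 1) = i + 1 + j by omega, qFac_succ q j] at ihi
      rw [qFac_succ q i] at left_parent
      rw [← add_assoc, gaussBinom_succ_succ, qFac_succ q (i + 1 + j), qFac_succ q i, qFac_succ q j,
        qInt_split]
      linear_combination (q ^ (j + 1) * qInt q (i + 1)) * ihi + qInt q (j + 1) * left_parent

theorem gaussBinom_eq_qBinom {m j : ℕ} (hm : qFac q m ≠ 0) (hj : j ≤ m) :
    gaussBinom q m j = qBinom q m j := by
  have key := gaussBinom_mul_qFac_mul_qFac q (m - j) j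
  rw [Nat.sub_add_cancel hj] at key
  exact eq_div_of_mul_eq (right_ne_zero_of_mul (key ▸ hm)) key

theorem qInt_ne_zero {ℓ m : ℕ} (hq : IsPrimitiveRoot q ℓ) (hm₀ : m ≠ 0) (hm : m < ℓ) :
    qInt q m ≠ 0 := fun h =>
  hq.pow_ne_one_of_pos_of_lt hm₀ hm <| sub_eq_zero.mp <| by
    rw [← geom_sum_mul, ← qInt, h, zero_mul]

theorem qFac_ne_zero {ℓ m : ℕ} (hq : IsPrimitiveRoot q ℓ) (hm : m < ℓ) : qFac q m ≠ 0 :=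
  Finset.prod_ne_zero_iff.mpr fun i hi =>
    qInt_ne_zero hq i.succ_ne_zero (by have := Finset.mem_range.mp hi; omega)

end GaussianBinomial

section SkewCommutation

variable {R B : Type*} [CommSemiring R] [Semiring B] [Algebra R B]

theorem semiconjBy_pow_left_smul {c : R} {x y : B} (h : SemiconjBy y x (c • x)) (m : ℕ) :
    SemiconjBy (y ^ m) x (c ^ m • x) := by
  induction m with
  | zero => simp
  | succ m ih =>
    rw [pow_succ, pow_succ', mul_comm, mul_smul, smul_comm]
    exact (ih.smul_right c).mul_left h

theorem semiconjBy_pow_pow_smul {c : R} {x y : B} (h : SemiconjBy y x (c • x)) (b a : ℕ) :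
    SemiconjBy (y ^ b) (x ^ a) (c ^ (b * a) • x ^ a) := by
  rw [pow_mul, ← smul_pow]
  exact (semiconjBy_pow_left_smul h b).pow_right a

theorem add_pow_of_semiconjBy_smul {q : R} {a b : B} (h : SemiconjBy b a (q • a)) (m : ℕ) :
    (a + b) ^ m = ∑ j ∈ Finset.range (m + 1), gaussBinom q m j • (a ^ (m - j) * b ^ j) := by
  induction m with
  | zero => simp
  | succ m ih =>
    have mul_a : (∑ j ∈ Finset.range (m + 1), gaussBinom q m j • (a ^ (m - j) * b ^ j)) * a =
        ∑ j ∈ Finset.range (m + 2), (q ^ j * gaussBinom q m j) • (a ^ (m + 1 - j) * b ^ j) := by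
      rw [Finset.sum_range_succ _ (m + 1), gaussBinom_eq_zero_of_lt q m.lt_succ_self, mul_zero,
        zero_smul, add_zero, Finset.sum_mul]
      refine Finset.sum_congr rfl fun j hj => ?_
      rw [Nat.succ_sub (Finset.mem_range_succ_iff.mp hj), pow_succ, smul_mul_assoc, mul_assoc,
        (semiconjBy_pow_left_smul h j).eq, smul_mul_assoc, mul_smul_comm, smul_smul, mul_assoc,
        mul_comm (q ^ j)]
    have mul_b : (∑ j ∈ Finset.range (m + 1), gaussBinom q m j • (a ^ (m - j) * b ^ j)) * b =
        ∑ j ∈ Finset.range (m + 1),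
          gaussBinom q m j • (a ^ (m + 1 - (j + 1)) * b ^ (j + 1)) := by
      simp only [Finset.sum_mul, smul_mul_assoc, mul_assoc, ← pow_succ, Nat.add_sub_add_right]
    rw [pow_succ, ih, mul_add, mul_a, mul_b, Finset.sum_range_succ',
      Finset.sum_range_succ' _ (m + 1), add_right_comm, ← Finset.sum_add_distrib]
    simp only [gaussBinom_succ_succ, add_smul, gaussBinom_zero_right, pow_zero, one_mul]

theorem semiconjBy_prod_ofFn_smul {n : ℕ} {c : Fin n → R} {y : B} {x : Fin n → B}
    (h : ∀ j, SemiconjBy y (x j) (c j • x j)) :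
    SemiconjBy y (List.ofFn x).prod ((∏ j, c j) • (List.ofFn x).prod) := by
  induction n with
  | zero => simp
  | succ n ih =>
    rw [List.ofFn_succ, List.prod_cons, Fin.prod_univ_succ, ← smul_mul_smul_comm]
    exact (h 0).mul_right (ih fun j => h j.succ)

theorem prod_ofFn_mul_of_semiconjBy_smul {n : ℕ} {c : Fin n → Fin n → R} {x y : Fin n → B}
    (h : ∀ i j, i < j → SemiconjBy (y i) (x j) (c i j • x j)) :
    (List.ofFn fun i => x i * y i).prod =
      (∏ i, ∏ j, if i < j then c i j else 1) • ((List.ofFn x).prod * (List.ofFn y).prod) := by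
  induction n with
  | zero => simp
  | succ n ih =>
    have move_y₀ := semiconjBy_prod_ofFn_smul (fun j : Fin n => h 0 j.succ j.succ_pos)
    have tail := ih (fun i j hij => h i.succ j.succ (Fin.succ_lt_succ_iff.mpr hij))
    simp only [List.ofFn_succ, List.prod_cons, Fin.prod_univ_succ, Fin.succ_lt_succ_iff,
      Fin.succ_pos, Fin.not_lt_zero, if_true, if_false, one_mul, tail]
    rw [mul_smul_comm, mul_assoc (x 0), ← mul_assoc (y 0), move_y₀.eq, smul_mul_assoc,
      smul_mul_assoc, mul_smul_comm, smul_smul, mul_comm (∏ j : Fin n, _)]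
    simp only [mul_assoc]

end SkewCommutation

section OrderedProducts

variable {R B C : Type*} [CommSemiring R] [Semiring B] [Algebra R B] [Semiring C] [Algebra R C]

theorem prod_ofFn_sum {n : ℕ} {κ : Type*} (s : Fin n → Finset κ)
    (f : Fin n → κ → B) :
    (List.ofFn fun i => ∑ m ∈ s i, f i m).prod =
      ∑ ξ ∈ Fintype.piFinset s, (List.ofFn fun i => f i (ξ i)).prod :=
  open Classical in (MultilinearMap.mkPiAlgebraFin ℕ n B).map_sum_finset f s

theorem prod_ofFn_smul {n : ℕ} (c : Fin n → R) (f : Fin n → B) :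
    (List.ofFn fun i => c i • f i).prod = (∏ i, c i) • (List.ofFn f).prod :=
  (MultilinearMap.mkPiAlgebraFin R n B).map_smul_univ c f

theorem prod_ofFn_tmul {n : ℕ} (f : Fin n → B) (g : Fin n → C) :
    (List.ofFn fun i => f i ⊗ₜ[R] g i).prod = (List.ofFn f).prod ⊗ₜ[R] (List.ofFn g).prod := by
  induction n with
  | zero => simp [Algebra.TensorProduct.one_def]
  | succ n ih =>
    simp only [List.ofFn_succ, List.prod_cons, ih, Algebra.TensorProduct.tmul_mul_tmul]

theorem xpow_eq_prod_ofFn {A : Type*} [Ring A] {n : ℕ} (x : Fin n → A) (γ : Fin n → ℕ) :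
    xpow x γ = (List.ofFn fun i => x i ^ γ i).prod := by
  rw [xpow, List.ofFn_eq_map]

end OrderedProducts

section SkewBicharacter

variable {n : ℕ}

theorem epsZ_eq_single (i : Fin n) : epsZ i = Pi.single i 1 := by
  ext j
  rw [epsZ, Pi.single_apply]

theorem starForm_epsZ (i j : Fin n) : starForm (epsZ i) (epsZ j) = if j < i then 1 else 0 := by
  have terms (j' i' : Fin n) : (if (j' : ℕ) < i' then epsZ i i' * epsZ j j' else 0) =
      if i' = i then if j' = j then if j < i then 1 else 0 else 0 else 0 := by
    simp only [epsZ, Fin.val_fin_lt]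
    split_ifs <;> simp_all
  simp only [starForm, terms, Finset.sum_ite_eq', Finset.mem_univ, if_true]

theorem theta_epsZ_of_lt {k : Type*} [Field k] (t : k) {i j : Fin n} (h : i < j) :
    theta t (epsZ i) (epsZ j) = t⁻¹ := by
  rw [theta, starForm_epsZ, starForm_epsZ, if_pos h, if_neg h.not_gt, zero_sub, zpow_neg_one]

theorem theta_self {k : Type*} [Field k] (t : k) (α : Fin n → ℤ) : theta t α α = 1 := by
  rw [theta, sub_self, zpow_zero]

theorem zpow_sum_of_ne_zero {ι G : Type*} [CommGroupWithZero G] {a : G} (ha : a ≠ 0)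
    (s : Finset ι) (f : ι → ℤ) : a ^ (∑ i ∈ s, f i) = ∏ i ∈ s, a ^ f i := by
  classical
  induction s using Finset.induction_on with
  | empty => simp
  | insert i s hi ih => rw [Finset.sum_insert hi, Finset.prod_insert hi, zpow_add₀ ha, ih]

theorem zpow_neg_starForm {k : Type*} [Field k] {t : k} (ht : t ≠ 0) (α β : Fin n → ℤ) :
    t ^ (-starForm α β) = ∏ i, ∏ j, if i < j then t⁻¹ ^ (β i * α j) else 1 := by
  simp only [starForm, ← inv_zpow', zpow_sum_of_ne_zero (inv_ne_zero ht), pow_ite,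
    zpow_zero, Fin.val_fin_lt, mul_comm (α _)]

end SkewBicharacter

namespace TaftPresentation

variable {k : Type*} [Field k] {A : Type*} [Ring A] [HopfAlgebra k A] {n ℓ : ℕ} {q t : k}
  (T : TaftPresentation k A n ℓ q t)

theorem K_nsmul (m : ℕ) (α : Fin n → ℤ) : T.K (m • α) = T.K α ^ m := by
  induction m with
  | zero => rw [zero_smul, T.K_zero, pow_zero]
  | succ m ih => rw [succ_nsmul, ← T.K_add, ih, pow_succ]

theorem K_list_sum (L : List (Fin n → ℤ)) : T.K L.sum = (L.map T.K).prod := by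
  induction L with
  | nil => exact T.K_zero
  | cons α L ih => rw [List.sum_cons, ← T.K_add, ih, List.map_cons, List.prod_cons]

theorem prod_ofFn_K_epsZ_pow (b : Fin n → ℕ) :
    (List.ofFn fun i => T.K (epsZ i) ^ b i).prod = T.K fun i => (b i : ℤ) := by
  have expand : (fun i => (b i : ℤ)) = (List.ofFn fun i => b i • epsZ i).sum := by
    simp only [List.sum_ofFn, epsZ_eq_single, ← Pi.single_smul, nsmul_eq_mul, mul_one]
    exact (Finset.univ_sum_single _).symm
  rw [expand, K_list_sum, List.map_ofFn]
  simp only [Function.comp_def, K_nsmul]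

theorem semiconjBy_K_x_self (i : Fin n) : SemiconjBy (T.K (epsZ i)) (T.x i) (q • T.x i) := by
  rw [SemiconjBy, T.K_x, theta_self, if_pos rfl, one_mul, smul_mul_assoc]

theorem semiconjBy_K_x_of_lt {i j : Fin n} (h : i < j) :
    SemiconjBy (T.K (epsZ i)) (T.x j) (t⁻¹ • T.x j) := by
  rw [SemiconjBy, T.K_x, theta_epsZ_of_lt t h, if_neg h.ne, mul_one, smul_mul_assoc]

theorem prod_ofFn_x_pow_mul_K_pow (ht : t ≠ 0) (a b : Fin n → ℕ) :
    (List.ofFn fun i => T.x i ^ a i * T.K (epsZ i) ^ b i).prod =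
      t ^ (-starForm (fun i => (a i : ℤ)) (fun i => (b i : ℤ))) •
        (xpow T.x a * T.K fun i => (b i : ℤ)) := by
  rw [prod_ofFn_mul_of_semiconjBy_smul fun i j hij =>
      semiconjBy_pow_pow_smul (T.semiconjBy_K_x_of_lt hij) (b i) (a j),
    prod_ofFn_K_epsZ_pow, xpow_eq_prod_ofFn, zpow_neg_starForm ht]
  simp only [← Nat.cast_mul, zpow_natCast]

theorem comul_x_pow (i : Fin n) (m : ℕ) :
    Coalgebra.comul (R := k) (T.x i ^ m) =
      ∑ j ∈ Finset.Iic m,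
        gaussBinom q m j • ((T.x i ^ (m - j) * T.K (epsZ i) ^ j) ⊗ₜ[k] (T.x i ^ j)) := by
  have skew : SemiconjBy (T.K (epsZ i) ⊗ₜ[k] T.x i) (T.x i ⊗ₜ[k] (1 : A))
      (q • (T.x i ⊗ₜ[k] (1 : A))) := by
    rw [SemiconjBy, TensorProduct.smul_tmul', Algebra.TensorProduct.tmul_mul_tmul,
      Algebra.TensorProduct.tmul_mul_tmul, (T.semiconjBy_K_x_self i).eq, mul_one, one_mul]
  rw [Bialgebra.comul_pow, T.comul_x, add_pow_of_semiconjBy_smul skew, Nat.range_succ_eq_Iic]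
  simp only [Algebra.TensorProduct.tmul_pow, Algebra.TensorProduct.tmul_mul_tmul, one_pow, one_mul]

theorem comul_xpow (ht : t ≠ 0) (γ : Fin n → ℕ) :
    Coalgebra.comul (R := k) (xpow T.x γ) =
      ∑ ξ ∈ Finset.Iic γ,
        ((∏ i, gaussBinom q (γ i) (ξ i)) *
            t ^ (-starForm (fun i => (γ i : ℤ) - ξ i) (fun i => (ξ i : ℤ)))) •
          ((xpow T.x (γ - ξ) * T.K fun i => (ξ i : ℤ)) ⊗ₜ[k] xpow T.x ξ) := by
  have expand : Coalgebra.comul (R := k) (xpow T.x γ) =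
      (List.ofFn fun i => Coalgebra.comul (R := k) (T.x i ^ γ i)).prod := by
    simp only [xpow_eq_prod_ofFn, ← Bialgebra.comulAlgHom_apply (R := k), map_list_prod,
      List.map_ofFn, Function.comp_def]
  simp only [expand, comul_x_pow, prod_ofFn_sum]
  refine Finset.sum_congr rfl fun ξ hξ => ?_
  have cast_sub (i : Fin n) : ((γ i - ξ i : ℕ) : ℤ) = γ i - ξ i :=
    Nat.cast_sub (Finset.mem_Iic.mp hξ i)
  rw [prod_ofFn_smul, prod_ofFn_tmul, T.prod_ofFn_x_pow_mul_K_pow ht, ← TensorProduct.smul_tmul',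
    smul_smul, ← xpow_eq_prod_ofFn]
  simp only [cast_sub, Pi.sub_def]

end TaftPresentation

theorem sum_Iic_val_eq_sum_ite {M : Type*} [AddCommMonoid M] {n ℓ : ℕ} (γ : Fin n → Fin ℓ)
    (f : (Fin n → ℕ) → M) :
    ∑ ξ ∈ Finset.Iic fun i => (γ i : ℕ), f ξ =
      ∑ ξ : Fin n → Fin ℓ, if ∀ i, (ξ i : ℕ) ≤ (γ i : ℕ) then f (fun i => ξ i) else 0 := by
  rw [← Finset.sum_filter]
  symm
  refine Finset.sum_nbij (fun ξ i => (ξ i : ℕ)) (fun ξ hξ => ?_) (fun ξ _ η _ h => ?_)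
    (fun ξ hξ => ?_) (fun _ _ => rfl)
  · exact Finset.mem_Iic.mpr (Finset.mem_filter.mp hξ).2
  · exact funext fun i => Fin.ext (congrFun h i)
  · have le : ∀ i, ξ i ≤ γ i := Finset.mem_Iic.mp hξ
    exact ⟨fun i => ⟨ξ i, (le i).trans_lt (γ i).isLt⟩,
      Finset.mem_filter.mpr ⟨Finset.mem_univ _, le⟩, rfl⟩

theorem stmt3_general {k : Type*} [Field k] {A : Type*} [Ring A] [HopfAlgebra k A] {n ℓ : ℕ}
    {q t : k} (ht : t ≠ 0) (T : TaftPresentation k A n ℓ q t) (γ : Fin n → ℕ)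
    (hγ : ∀ i, qFac q (γ i) ≠ 0) (α : Fin n → ℤ) :
    Coalgebra.comul (R := k) (xpow T.x γ * T.K α) =
      ∑ ξ ∈ Finset.Iic γ,
        ((∏ i, qBinom q (γ i) (ξ i)) *
            t ^ (-starForm (fun i => (γ i : ℤ) - ξ i) (fun i => (ξ i : ℤ)))) •
          ((xpow T.x (γ - ξ) * T.K fun i => (ξ i : ℤ) + α i) ⊗ₜ[k] (xpow T.x ξ * T.K α)) := by
  rw [Bialgebra.comul_mul, T.comul_xpow ht, T.comul_K, Finset.sum_mul]
  refine Finset.sum_congr rfl fun ξ hξ => ?_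
  have binom (i : Fin n) : gaussBinom q (γ i) (ξ i) = qBinom q (γ i) (ξ i) :=
    gaussBinom_eq_qBinom (hγ i) (Finset.mem_Iic.mp hξ i)
  simp only [binom, smul_mul_assoc, Algebra.TensorProduct.tmul_mul_tmul, mul_assoc, T.K_add,
    Pi.add_def]

/-- the comultiplication formula in the `n`-rank Taft algebra:
`Δ(x^γ K(α)) = Σ_{ξ ≤ γ} (γ choose ξ)_q q^{-(γ-ξ)*ξ} x^{γ-ξ} K(ξ+α) ⊗ x^ξ K(α)`. -/
theorem stmt3 {k : Type*} [Field k] [CharZero k] [IsAlgClosed k]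
    {A : Type*} [Ring A] [HopfAlgebra k A] {n ℓ : ℕ} {q : k}
    (hq : IsPrimitiveRoot q ℓ) (hℓ : 1 < ℓ)
    (T : TaftPresentation k A n ℓ q q)
    (γ α : Fin n → Fin ℓ) :
    Coalgebra.comul (R := k) (T.mono γ α)
      = ∑ ξ : Fin n → Fin ℓ,
          if ∀ i, (ξ i : ℕ) ≤ (γ i : ℕ) then
            ((∏ i, qBinom q (γ i : ℕ) (ξ i : ℕ)) *
              q ^ (-(starForm (fun i => ((γ i : ℕ) : ℤ) - ((ξ i : ℕ) : ℤ))
                      (fun i => ((ξ i : ℕ) : ℤ)))))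
              • ((xpow T.x (fun i => (γ i : ℕ) - (ξ i : ℕ))
                    * T.K (fun i => ((ξ i : ℕ) : ℤ) + ((α i : ℕ) : ℤ)))
                  ⊗ₜ[k] T.mono ξ α)
          else 0 := by
  exact (stmt3_general (hq.ne_zero (by omega)) T (fun i => γ i)
    (fun i => qFac_ne_zero hq (γ i).isLt) fun i => α i).trans (sum_Iic_val_eq_sum_ite γ _)
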